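/- Let Δ be a d-dimensional IP simplex of Gorenstein index g. Then Vol(Δ)·Vol(Δ*) ≤ t_{g,d+1}²/g^{d+2}. Equality holds if and only if there is H ∈ GL(d,ℚ) such that Δ = H·Δ(P), where P is the d×(d+1) matrix whose first d columns are the standard basis vectors e₁,…,e_d and whose last column is (−t_{g,d+1}/s_{g,1}, …, −t_{g,d+1}/s_{g,d}). -/

import Mathlib

open Finset

/-- The origin lies in the interior of the simplex with the given vertices,
i.e. the origin is a convex combination of the vertices with positive coefficients. -/
def OriginInInterior {d : ℕ} (v : Fin (d + 1) → Fin d → ℚ) : Prop :=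
  ∃ w : Fin (d + 1) → ℚ, (∀ i, 0 < w i) ∧ ∑ i, w i = 1 ∧ ∀ j, ∑ i, w i * v i j = 0

/-- An IP simplex, given by its tuple of rational vertices: affinely independent
vertices with the origin in the interior. -/
def IsIPSimplex {d : ℕ} (v : Fin (d + 1) → Fin d → ℚ) : Prop :=
  AffineIndependent ℚ v ∧ OriginInInterior v

/-- The normalized volume `d! · vol(Δ)` of the simplex with the given vertices. -/
def normVol {d : ℕ} (v : Fin (d + 1) → Fin d → ℚ) : ℚ :=
  |(Matrix.of fun i j : Fin d => v i.succ j - v 0 j).det|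

/-- The index of rationality: the least positive integer `k` such that all vertices of
`kΔ` are lattice points. -/
noncomputable def ratIndex {d : ℕ} (v : Fin (d + 1) → Fin d → ℚ) : ℕ :=
  sInf {k : ℕ | 0 < k ∧ ∀ i j, ∃ z : ℤ, (k : ℚ) * v i j = (z : ℚ)}

/-- The `g`-Sylvester sequence: `s_{g,1} = g+1`, `s_{g,k+1} = s_{g,k}(s_{g,k}-1)+1`.
(The value at `0` is junk and never used.) -/
def sylv (g : ℕ) : ℕ → ℕ
  | 0 => 0
  | 1 => g + 1
  | k + 2 => sylv g (k + 1) * (sylv g (k + 1) - 1) + 1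

/-- The truncated `g`-Sylvester sequence `t_{g,k} = s_{g,k} - 1`. -/
def tsylv (g k : ℕ) : ℕ := sylv g k - 1

/-- The extremal `d×(d+1)` vertex matrix for the Mahler volume bound: the first `d`
columns are the standard basis vectors `e_1,…,e_d` and the last column is
`(-t_{g,d+1}/s_{g,1}, …, -t_{g,d+1}/s_{g,d})`. -/
def PMahler (g d : ℕ) : Fin (d + 1) → Fin d → ℚ := fun i j =>
  if i.val < d then (if j.val = i.val then 1 else 0)
  else -((tsylv g (d + 1) : ℚ) / (sylv g (j.val + 1) : ℚ))

/-!
Let `w` be the barycentric coordinates of the origin in `Δ`. In homogeneous coordinates the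
relations `⟨uᵢ, vⱼ⟩ = -1` for `i ≠ j` become `1 + ⟨uᵢ, vⱼ⟩ = δᵢⱼ / wᵢ`, so `Vol(Δ) Vol(Δ*) = ∏ 1 /
wᵢ`. They also show that the `mᵢ = g / wᵢ` are integers, and `∑ 1 / mᵢ = 1 / g`. It remains to see
that `∏ mᵢ` is largest exactly when `m` is a permutation of `s₁, …, s_d, t_{d+1}`. After sorting
`m`, Curtiss' theorem says that every initial sum of the `1 / mᵢ` is at most that of the `1 / sᵢ`,
and by AM-GM such a domination of initial sums forces an inequality of products. In the equality
case, `Δ` is determined by the weights `w` up to a linear map.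
-/

section ProductComparison

lemma sum_range_succ_mul_le {R : Type*} [Ring R] [PartialOrder R] [IsOrderedRing R]
    {c x : ℕ → R} (hc : Monotone c) {n : ℕ} (hx : ∀ j ≤ n, 0 ≤ ∑ i ∈ range j, x i) :
    ∑ i ∈ range (n + 1), c i * x i ≤ c n * ∑ i ∈ range (n + 1), x i := by
  have hparts := sum_range_by_parts c x (n + 1)
  simp only [smul_eq_mul, add_tsub_cancel_right] at hparts
  rw [hparts, sub_le_self_iff]
  exact sum_nonneg fun i hi =>
    mul_nonneg (sub_nonneg.2 (hc i.le_succ)) (hx _ (mem_range.1 hi))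

lemma prod_lt_one_of_sum_le_card {ι : Type*} {s : Finset ι} {r : ι → ℝ} (hr : ∀ i ∈ s, 0 < r i)
    (hsum : ∑ i ∈ s, r i ≤ #s) (hne : ∃ i ∈ s, r i ≠ 1) : ∏ i ∈ s, r i < 1 := by
  obtain ⟨k, hk, hrk⟩ := hne
  calc ∏ i ∈ s, r i < ∏ i ∈ s, Real.exp (r i - 1) := by
        refine prod_lt_prod hr (fun i _ => ?_) ⟨k, hk, ?_⟩
        · simpa using Real.add_one_le_exp (r i - 1)
        · simpa using Real.add_one_lt_exp (sub_ne_zero.2 hrk)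
    _ = Real.exp (∑ i ∈ s, (r i - 1)) := (Real.exp_sum _ _).symm
    _ ≤ 1 := by simpa [sum_sub_distrib] using hsum

variable {a b : ℕ → ℝ} {n : ℕ}

lemma sum_range_div_le (ha : ∀ i, 0 < a i) (hanti : Antitone a)
    (hpartial : ∀ j < n, ∑ i ∈ range j, a i ≤ ∑ i ∈ range j, b i)
    (htotal : ∑ i ∈ range n, b i ≤ ∑ i ∈ range n, a i) :
    ∑ i ∈ range n, b i / a i ≤ n := by
  obtain _ | n := n
  · simp
  have hexcess : ∑ i ∈ range (n + 1), (a i)⁻¹ * (b i - a i) ≤ 0 :=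
    calc _ ≤ (a n)⁻¹ * ∑ i ∈ range (n + 1), (b i - a i) :=
          sum_range_succ_mul_le (fun i j hij => inv_anti₀ (ha j) (hanti hij))
            fun j hj => by simpa [sum_sub_distrib] using hpartial j (Nat.lt_succ_of_le hj)
      _ ≤ 0 := mul_nonpos_of_nonneg_of_nonpos (inv_nonneg.2 (ha n).le)
          (by simpa [sum_sub_distrib] using htotal)
  have hterm (i : ℕ) : (a i)⁻¹ * (b i - a i) = b i / a i - 1 := by
    field_simp [(ha i).ne']
  simpa [hterm, sum_sub_distrib] using hexcess

lemma prod_range_lt_of_sum_range_le (ha : ∀ i, 0 < a i) (hb : ∀ i, 0 < b i) (hanti : Antitone a)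
    (hpartial : ∀ j < n, ∑ i ∈ range j, a i ≤ ∑ i ∈ range j, b i)
    (htotal : ∑ i ∈ range n, b i ≤ ∑ i ∈ range n, a i) (hne : ∃ i < n, a i ≠ b i) :
    ∏ i ∈ range n, b i < ∏ i ∈ range n, a i := by
  obtain ⟨k, hk, hab⟩ := hne
  rw [← div_lt_one (prod_pos fun i _ => ha i), ← prod_div_distrib]
  refine prod_lt_one_of_sum_le_card (fun i _ => div_pos (hb i) (ha i)) ?_
    ⟨k, mem_range.2 hk, fun h => hab ((div_eq_one_iff_eq (ha k).ne').1 h).symm⟩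
  simpa using sum_range_div_le ha hanti hpartial htotal

lemma prod_range_le_of_sum_range_le (ha : ∀ i, 0 < a i) (hb : ∀ i, 0 < b i) (hanti : Antitone a)
    (hpartial : ∀ j < n, ∑ i ∈ range j, a i ≤ ∑ i ∈ range j, b i)
    (htotal : ∑ i ∈ range n, b i ≤ ∑ i ∈ range n, a i) :
    ∏ i ∈ range n, b i ≤ ∏ i ∈ range n, a i := by
  by_cases hne : ∃ i < n, a i ≠ b i
  · exact (prod_range_lt_of_sum_range_le ha hb hanti hpartial htotal hne).le
  · push Not at hne
    exact (prod_congr rfl fun i hi => (hne i (mem_range.1 hi)).symm).le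

end ProductComparison

section Sylvester

variable {g : ℕ}

lemma sylv_succ (g k : ℕ) : sylv g (k + 1) = tsylv g (k + 1) + 1 := by
  cases k <;> simp [tsylv, sylv]

lemma tsylv_one (g : ℕ) : tsylv g 1 = g := by simp [tsylv, sylv]

lemma tsylv_succ (g k : ℕ) : tsylv g (k + 2) = tsylv g (k + 1) * sylv g (k + 1) := by
  simp [tsylv, sylv, mul_comm]

lemma sylv_pos (g k : ℕ) : 0 < sylv g (k + 1) := by
  rw [sylv_succ]
  exact Nat.succ_pos _

lemma tsylv_pos (hg : 0 < g) (k : ℕ) : 0 < tsylv g (k + 1) := by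
  induction k with
  | zero => rwa [tsylv_one]
  | succ k ih =>
    rw [tsylv_succ]
    exact Nat.mul_pos ih (sylv_pos g k)

lemma mul_prod_sylv (g k : ℕ) : g * ∏ i ∈ range k, sylv g (i + 1) = tsylv g (k + 1) := by
  induction k with
  | zero => simp [tsylv_one]
  | succ k ih => rw [prod_range_succ, ← mul_assoc, ih, tsylv_succ]

lemma inv_sub_sum_inv_sylv (K : Type*) [Field K] [CharZero K] (hg : 0 < g) (k : ℕ) :
    (g : K)⁻¹ - ∑ i ∈ range k, (sylv g (i + 1) : K)⁻¹ = (tsylv g (k + 1) : K)⁻¹ := by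
  induction k with
  | zero => simp [tsylv_one]
  | succ k ih =>
    have ht : (tsylv g (k + 1) : K) ≠ 0 := Nat.cast_ne_zero.2 (tsylv_pos hg k).ne'
    have hs : (sylv g (k + 1) : K) ≠ 0 := Nat.cast_ne_zero.2 (sylv_pos g k).ne'
    rw [sum_range_succ, ← sub_sub, ih, tsylv_succ, Nat.cast_mul, inv_sub_inv ht hs, sylv_succ]
    simp

/-- The extremal denominators `s_{g,1}, …, s_{g,d}, t_{g,d+1}`, indexed from `0`; the values at
indices beyond `d` are irrelevant. -/
def sylvDenom (g d : ℕ) : ℕ → ℕ :=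
  Function.update (fun i => sylv g (i + 1)) d (tsylv g (d + 1))

lemma sylvDenom_self (g d : ℕ) : sylvDenom g d d = tsylv g (d + 1) :=
  Function.update_self ..

lemma sylvDenom_of_lt (g : ℕ) {d i : ℕ} (h : i < d) : sylvDenom g d i = sylv g (i + 1) :=
  Function.update_of_ne h.ne ..

lemma sylvDenom_pos (hg : 0 < g) (d i : ℕ) : 0 < sylvDenom g d i := by
  obtain rfl | h := eq_or_ne i d
  · rw [sylvDenom_self]
    exact tsylv_pos hg i
  · rw [sylvDenom, Function.update_of_ne h]
    exact sylv_pos g i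

lemma mul_prod_sylvDenom (g d : ℕ) :
    g * ∏ i ∈ range (d + 1), sylvDenom g d i = tsylv g (d + 1) ^ 2 := by
  rw [prod_range_succ, prod_congr rfl fun i hi => sylvDenom_of_lt g (mem_range.1 hi), ← mul_assoc,
    mul_prod_sylv, sylvDenom_self, sq]

lemma sum_inv_sylvDenom_range_of_le (K : Type*) [Field K] (g : ℕ) {d j : ℕ} (hj : j ≤ d) :
    ∑ i ∈ range j, (sylvDenom g d i : K)⁻¹ = ∑ i ∈ range j, (sylv g (i + 1) : K)⁻¹ :=
  sum_congr rfl fun _ hi => by rw [sylvDenom_of_lt g ((mem_range.1 hi).trans_le hj)]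

lemma sum_inv_sylvDenom (K : Type*) [Field K] [CharZero K] (hg : 0 < g) (d : ℕ) :
    ∑ i ∈ range (d + 1), (sylvDenom g d i : K)⁻¹ = (g : K)⁻¹ := by
  rw [sum_range_succ, sum_inv_sylvDenom_range_of_le K g le_rfl, sylvDenom_self,
    ← inv_sub_sum_inv_sylv K hg, add_sub_cancel]

end Sylvester

section EgyptianFractions

-- The right-hand side is a positive fraction with denominator `g * ∏ m`.
lemma inv_mul_prod_inv_le_inv_sub_sum_inv {K ι : Type*} [Field K] [LinearOrder K]
    [IsStrictOrderedRing K] {s : Finset ι} {m : ι → ℕ} (hm : ∀ i ∈ s, 0 < m i) {g : ℕ}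
    (hlt : ∑ i ∈ s, (m i : K)⁻¹ < (g : K)⁻¹) :
    (g : K)⁻¹ * ∏ i ∈ s, (m i : K)⁻¹ ≤ (g : K)⁻¹ - ∑ i ∈ s, (m i : K)⁻¹ := by
  classical
  have hg : 0 < (g : K) := inv_pos.1 ((sum_nonneg fun i _ => by positivity).trans_lt hlt)
  have hprod : 0 < ∏ i ∈ s, (m i : K) := prod_pos fun i hi => Nat.cast_pos.2 (hm i hi)
  have hsum : ∑ i ∈ s, (m i : K)⁻¹ = (∑ i ∈ s, ∏ j ∈ s.erase i, m j : ℕ) / ∏ i ∈ s, (m i : K) := by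
    rw [eq_div_iff hprod.ne', sum_mul, Nat.cast_sum]
    refine sum_congr rfl fun i hi => ?_
    rw [← mul_prod_erase s _ hi, inv_mul_cancel_left₀ (Nat.cast_ne_zero.2 (hm i hi).ne'),
      Nat.cast_prod]
  generalize ∑ i ∈ s, ∏ j ∈ s.erase i, m j = N at hsum
  have hN : g * N + 1 ≤ ∏ i ∈ s, m i := by
    rw [hsum, div_lt_iff₀ hprod, ← div_eq_inv_mul, lt_div_iff₀ hg, mul_comm] at hlt
    exact_mod_cast hlt
  have hN' : (g : K) * N + 1 ≤ ∏ i ∈ s, (m i : K) := by exact_mod_cast hN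
  rw [hsum, prod_inv_distrib, ← mul_inv, inv_eq_one_div, inv_eq_one_div,
    div_sub_div _ _ hg.ne' hprod.ne']
  gcongr
  linarith

variable {g : ℕ} {m : ℕ → ℕ}

-- At a first failure the domination of initial sums bounds `∏ 1 / mᵢ` from below, and then the
-- integrality bound above leaves `∑ 1 / mᵢ` no room to exceed `∑ 1 / sᵢ`.
theorem sum_inv_le_sum_inv_sylv (hg : 0 < g) (hm : ∀ i, 0 < m i) (hmono : Monotone m) {n : ℕ}
    (hlt : ∑ i ∈ range n, (m i : ℝ)⁻¹ < (g : ℝ)⁻¹) :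
    ∑ i ∈ range n, (m i : ℝ)⁻¹ ≤ ∑ i ∈ range n, (sylv g (i + 1) : ℝ)⁻¹ := by
  induction n using Nat.strong_induction_on with
  | _ n ih =>
    by_contra! hcon
    have hpartial (j : ℕ) (hj : j < n) :
        ∑ i ∈ range j, (m i : ℝ)⁻¹ ≤ ∑ i ∈ range j, (sylv g (i + 1) : ℝ)⁻¹ :=
      ih j hj <| (sum_le_sum_of_subset_of_nonneg (range_subset_range.2 hj.le)
        fun i _ _ => by positivity).trans_lt hlt
    have hprod : ∏ i ∈ range n, (sylv g (i + 1) : ℝ)⁻¹ ≤ ∏ i ∈ range n, (m i : ℝ)⁻¹ :=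
      prod_range_le_of_sum_range_le (fun i => inv_pos.2 (Nat.cast_pos.2 (hm i)))
        (fun i => inv_pos.2 (Nat.cast_pos.2 (sylv_pos g i)))
        (fun i j hij => inv_anti₀ (Nat.cast_pos.2 (hm i)) (Nat.cast_le.2 (hmono hij)))
        hpartial hcon.le
    refine lt_irrefl ((g : ℝ)⁻¹ - ∑ i ∈ range n, (m i : ℝ)⁻¹) ?_
    calc (g : ℝ)⁻¹ - ∑ i ∈ range n, (m i : ℝ)⁻¹
        < (g : ℝ)⁻¹ - ∑ i ∈ range n, (sylv g (i + 1) : ℝ)⁻¹ := sub_lt_sub_left hcon _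
      _ = (g : ℝ)⁻¹ * ∏ i ∈ range n, (sylv g (i + 1) : ℝ)⁻¹ := by
          rw [inv_sub_sum_inv_sylv ℝ hg, ← mul_prod_sylv, prod_inv_distrib, ← mul_inv]
          push_cast
          rfl
      _ ≤ (g : ℝ)⁻¹ * ∏ i ∈ range n, (m i : ℝ)⁻¹ := by gcongr
      _ ≤ (g : ℝ)⁻¹ - ∑ i ∈ range n, (m i : ℝ)⁻¹ :=
          inv_mul_prod_inv_le_inv_sub_sum_inv (fun i _ => hm i) hlt

theorem prod_range_lt_prod_range_sylvDenom (hg : 0 < g) (hm : ∀ i, 0 < m i) (hmono : Monotone m)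
    {d : ℕ} (hsum : ∑ i ∈ range (d + 1), (m i : ℝ)⁻¹ = (g : ℝ)⁻¹)
    (hne : ∃ i < d + 1, m i ≠ sylvDenom g d i) :
    ∏ i ∈ range (d + 1), m i < ∏ i ∈ range (d + 1), sylvDenom g d i := by
  have hm' (i : ℕ) : 0 < (m i : ℝ) := Nat.cast_pos.2 (hm i)
  have hdenom (i : ℕ) : 0 < (sylvDenom g d i : ℝ) := Nat.cast_pos.2 (sylvDenom_pos hg d i)
  have hpartial (j : ℕ) (hj : j < d + 1) :
      ∑ i ∈ range j, (m i : ℝ)⁻¹ ≤ ∑ i ∈ range j, (sylvDenom g d i : ℝ)⁻¹ := by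
    rw [sum_inv_sylvDenom_range_of_le ℝ g (Nat.le_of_lt_succ hj)]
    refine sum_inv_le_sum_inv_sylv hg hm hmono (hsum ▸ ?_)
    exact sum_lt_sum_of_subset (range_subset_range.2 hj.le) (mem_range.2 hj) notMem_range_self
      (inv_pos.2 (hm' j)) fun i _ _ => (inv_pos.2 (hm' i)).le
  have hinv : ∏ i ∈ range (d + 1), (sylvDenom g d i : ℝ)⁻¹ < ∏ i ∈ range (d + 1), (m i : ℝ)⁻¹ :=
    prod_range_lt_of_sum_range_le (fun i => inv_pos.2 (hm' i)) (fun i => inv_pos.2 (hdenom i))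
      (fun i j hij => inv_anti₀ (hm' i) (Nat.cast_le.2 (hmono hij))) hpartial
      (by rw [sum_inv_sylvDenom ℝ hg, hsum])
      (by simpa only [ne_eq, inv_inj, Nat.cast_inj] using hne)
  rw [prod_inv_distrib, prod_inv_distrib,
    inv_lt_inv₀ (prod_pos fun i _ => hdenom i) (prod_pos fun i _ => hm' i)] at hinv
  exact_mod_cast hinv

end EgyptianFractions

section SortedDenominators

lemma exists_perm_monotone_extension {α : Type*} [LinearOrder α] {n : ℕ} (f : Fin (n + 1) → α) :
    ∃ (σ : Equiv.Perm (Fin (n + 1))) (F : ℕ → α),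
      Monotone F ∧ ∀ i : Fin (n + 1), F i = f (σ i) := by
  refine ⟨Tuple.sort f, fun i => f (Tuple.sort f (Fin.clamp i n)),
    (Tuple.monotone_sort f).comp Fin.clamp_monotone, fun i => ?_⟩
  have hclamp : Fin.clamp i n = i := Fin.ext (min_eq_left i.is_le)
  simp only [hclamp]

variable {g d : ℕ} {m : Fin (d + 1) → ℕ}

lemma prod_lt_prod_sylvDenom_or_exists_perm (hg : 0 < g) (hm : ∀ i, 0 < m i)
    (hsum : ∑ i, (m i : ℚ)⁻¹ = (g : ℚ)⁻¹) :
    ∏ i, m i < ∏ i : Fin (d + 1), sylvDenom g d i ∨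
      ∃ σ : Equiv.Perm (Fin (d + 1)), ∀ i, m (σ i) = sylvDenom g d i := by
  obtain ⟨σ, M, hMmono, hM⟩ := exists_perm_monotone_extension m
  refine or_iff_not_imp_right.2 fun hσ => ?_
  have hMpos (i : ℕ) : 0 < M i :=
    calc 0 < m (σ 0) := hm _
      _ = M 0 := (hM 0).symm
      _ ≤ M i := hMmono i.zero_le
  have hMsum : ∑ i ∈ range (d + 1), (M i : ℚ)⁻¹ = (g : ℚ)⁻¹ := by
    rw [← Fin.sum_univ_eq_sum_range (fun i => (M i : ℚ)⁻¹)]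
    simp only [hM]
    rw [Equiv.sum_comp σ fun i => (m i : ℚ)⁻¹, hsum]
  have hne : ∃ i < d + 1, M i ≠ sylvDenom g d i := by
    by_contra! h
    exact hσ ⟨σ, fun i => by rw [← hM, h i i.isLt]⟩
  have hlt := prod_range_lt_prod_range_sylvDenom hg hMpos hMmono
    (by simpa using congrArg (Rat.cast (K := ℝ)) hMsum) hne
  rw [← Fin.prod_univ_eq_prod_range, ← Fin.prod_univ_eq_prod_range] at hlt
  simpa only [hM, Equiv.prod_comp σ m] using hlt

theorem prod_eq_prod_sylvDenom_iff (hg : 0 < g) (hm : ∀ i, 0 < m i)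
    (hsum : ∑ i, (m i : ℚ)⁻¹ = (g : ℚ)⁻¹) :
    ∏ i, m i = ∏ i : Fin (d + 1), sylvDenom g d i ↔
      ∃ σ : Equiv.Perm (Fin (d + 1)), ∀ i, m (σ i) = sylvDenom g d i := by
  refine ⟨fun h => (prod_lt_prod_sylvDenom_or_exists_perm hg hm hsum).resolve_left h.not_lt, ?_⟩
  rintro ⟨σ, hσ⟩
  rw [← Equiv.prod_comp σ m, prod_congr rfl fun i _ => hσ i]

theorem prod_le_prod_sylvDenom (hg : 0 < g) (hm : ∀ i, 0 < m i)
    (hsum : ∑ i, (m i : ℚ)⁻¹ = (g : ℚ)⁻¹) :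
    ∏ i, m i ≤ ∏ i : Fin (d + 1), sylvDenom g d i :=
  (prod_lt_prod_sylvDenom_or_exists_perm hg hm hsum).elim le_of_lt
    fun h => ((prod_eq_prod_sylvDenom_iff hg hm hsum).2 h).le

end SortedDenominators

section Weights

variable {K ι : Type*} [Field K] [LinearOrder K] [Fintype ι]

/-- `w` is the normalized weight system of the family `v`: the barycentric coordinates of the origin
with respect to `v`, required to be positive as the origin is an interior point. -/
structure IsNormalizedWeight {V : Type*} [AddCommGroup V] [Module K V] (v : ι → V) (w : ι → K) :
    Prop where
  pos : ∀ i, 0 < w i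
  sum_eq_one : ∑ i, w i = 1
  sum_smul_eq_zero : ∑ i, w i • v i = 0

namespace IsNormalizedWeight

lemma comp_equiv {ι' V : Type*} [Fintype ι'] [AddCommGroup V] [Module K V] {v : ι → V} {w : ι → K}
    (hw : IsNormalizedWeight v w) (σ : ι' ≃ ι) : IsNormalizedWeight (v ∘ σ) (w ∘ σ) where
  pos i := hw.pos (σ i)
  sum_eq_one := (Equiv.sum_comp σ w).trans hw.sum_eq_one
  sum_smul_eq_zero := (Equiv.sum_comp σ fun i => w i • v i).trans hw.sum_smul_eq_zero

lemma eq_sum_mul_of_sum_smul_eq_zero {V : Type*} [AddCommGroup V] [Module K V] {v : ι → V}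
    {w : ι → K} (hw : IsNormalizedWeight v w) (hv : AffineIndependent K v) {c : ι → K}
    (hc : ∑ i, c i • v i = 0) (i : ι) : c i = (∑ j, c j) * w i := by
  refine sub_eq_zero.1 <| hv.eq_zero_of_sum_eq_zero (s := univ)
    (w := fun i => c i - (∑ j, c j) * w i) ?_ ?_ i (mem_univ i)
  · rw [sum_sub_distrib, ← mul_sum, hw.sum_eq_one, mul_one, sub_self]
  · simp only [sub_smul, mul_smul, sum_sub_distrib, ← smul_sum, hw.sum_smul_eq_zero, hc, smul_zero,
      sub_zero]

lemma dotProduct_eq_inv_sub_one {κ : Type*} [Fintype κ] {v : ι → κ → K} {w : ι → K}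
    (hw : IsNormalizedWeight v w) {x : κ → K} {i : ι} (hx : ∀ j ≠ i, x ⬝ᵥ v j = -1) :
    x ⬝ᵥ v i = (w i)⁻¹ - 1 := by
  classical
  have hother : ∑ j ∈ univ.erase i, w j = 1 - w i := by
    rw [← hw.sum_eq_one, sum_erase_eq_sub (mem_univ i)]
  have hzero : w i * (x ⬝ᵥ v i) - (1 - w i) = 0 :=
    calc w i * (x ⬝ᵥ v i) - (1 - w i)
        = w i * (x ⬝ᵥ v i) + ∑ j ∈ univ.erase i, w j * (x ⬝ᵥ v j) := by
          rw [sum_congr rfl fun j hj => by rw [hx j (ne_of_mem_erase hj), mul_neg_one],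
            sum_neg_distrib, hother, sub_eq_add_neg]
      _ = ∑ j, w j * (x ⬝ᵥ v j) :=
          add_sum_erase univ (fun j => w j * (x ⬝ᵥ v j)) (mem_univ i)
      _ = x ⬝ᵥ ∑ j, w j • v j := by simp only [dotProduct_sum, dotProduct_smul, smul_eq_mul]
      _ = 0 := by rw [hw.sum_smul_eq_zero, dotProduct_zero]
  field_simp [(hw.pos i).ne']
  linear_combination hzero

end IsNormalizedWeight

lemma IsIPSimplex.exists_isNormalizedWeight {d : ℕ} {v : Fin (d + 1) → Fin d → ℚ}
    (hv : IsIPSimplex v) : ∃ w : Fin (d + 1) → ℚ, IsNormalizedWeight v w := by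
  obtain ⟨-, w, hpos, hsum, hzero⟩ := hv
  exact ⟨w, hpos, hsum, funext fun j => by simpa using hzero j⟩

end Weights

section VolumeProduct

/-- The vertex matrix in homogeneous coordinates: its rows are the vectors `(1, v i)`. -/
def homogenization {R : Type*} [One R] {n : ℕ} (v : Fin (n + 1) → Fin n → R) :
    Matrix (Fin (n + 1)) (Fin (n + 1)) R :=
  Matrix.of fun i => Matrix.vecCons 1 (v i)

lemma det_homogenization {R : Type*} [CommRing R] {n : ℕ} (v : Fin (n + 1) → Fin n → R) :
    (homogenization v).det = (Matrix.of fun i j : Fin n => v i.succ j - v 0 j).det := by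
  let B : Matrix (Fin (n + 1)) (Fin (n + 1)) R := Matrix.of <|
    Matrix.vecCons (Matrix.vecCons 1 (v 0)) fun i => Matrix.vecCons 0 (v i.succ - v 0)
  have hrows : (homogenization v).det = B.det := by
    refine Matrix.det_eq_of_forall_row_eq_smul_add_const (Fin.cons 0 1) 0 rfl fun i j => ?_
    cases i using Fin.cases <;> cases j using Fin.cases <;> simp [homogenization, B]
  rw [hrows, Matrix.det_succ_column_zero, Fin.sum_univ_succ]
  simp [B, Matrix.submatrix]

variable {d : ℕ} {v u : Fin (d + 1) → Fin d → ℚ} {w : Fin (d + 1) → ℚ}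

lemma normVol_eq_abs_det_homogenization (v : Fin (d + 1) → Fin d → ℚ) :
    normVol v = |(homogenization v).det| := by
  rw [det_homogenization, normVol]

theorem normVol_mul_normVol_eq_prod_inv (hw : IsNormalizedWeight v w)
    (hu : ∀ i j, i ≠ j → u i ⬝ᵥ v j = -1) : normVol v * normVol u = ∏ i, (w i)⁻¹ := by
  have hdiag : homogenization u * (homogenization v).transpose =
      Matrix.diagonal fun i => (w i)⁻¹ := by
    ext i j
    change Matrix.vecCons 1 (u i) ⬝ᵥ Matrix.vecCons 1 (v j) = _
    rw [Matrix.cons_dotProduct_cons, mul_one]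
    obtain rfl | hij := eq_or_ne i j
    · rw [hw.dotProduct_eq_inv_sub_one fun j hj => hu i j hj.symm, Matrix.diagonal_apply_eq,
        add_sub_cancel]
    · rw [hu i j hij, Matrix.diagonal_apply_ne _ hij, add_neg_cancel]
  rw [normVol_eq_abs_det_homogenization, normVol_eq_abs_det_homogenization, ← abs_mul, mul_comm,
    ← Matrix.det_transpose (homogenization v), ← Matrix.det_mul, hdiag, Matrix.det_diagonal]
  exact abs_of_pos (prod_pos fun i _ => inv_pos.2 (hw.pos i))

end VolumeProduct

section GorensteinIndex

variable {d : ℕ} {v u : Fin (d + 1) → Fin d → ℚ} {w : Fin (d + 1) → ℚ}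

lemma exists_int_eq_ratIndex_mul (v : Fin (d + 1) → Fin d → ℚ) (i : Fin (d + 1)) (j : Fin d) :
    ∃ z : ℤ, (ratIndex v : ℚ) * v i j = z := by
  obtain h | h := (ratIndex v).eq_zero_or_pos
  · exact ⟨0, by simp [h]⟩
  · exact (Nat.sInf_mem (Nat.nonempty_of_pos_sInf h)).2 i j

lemma exists_int_eq_ratIndex_mul_dotProduct (v u : Fin (d + 1) → Fin d → ℚ) (i j : Fin (d + 1)) :
    ∃ z : ℤ, (ratIndex v * ratIndex u : ℚ) * (u i ⬝ᵥ v j) = z := by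
  choose a ha using exists_int_eq_ratIndex_mul v j
  choose b hb using exists_int_eq_ratIndex_mul u i
  refine ⟨∑ c, a c * b c, ?_⟩
  simp only [dotProduct, mul_sum, Int.cast_sum, Int.cast_mul, ← ha, ← hb]
  exact sum_congr rfl fun c _ => by ring

theorem exists_nat_weight_eq_div (hw : IsNormalizedWeight v w)
    (hu : ∀ i j, i ≠ j → u i ⬝ᵥ v j = -1) {g : ℕ} (hg : 0 < g)
    (hGor : ratIndex v * ratIndex u = g) (i : Fin (d + 1)) :
    ∃ m : ℕ, 0 < m ∧ w i = g / m := by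
  obtain ⟨z, hz⟩ := exists_int_eq_ratIndex_mul_dotProduct v u i i
  rw [hw.dotProduct_eq_inv_sub_one fun j hj => hu i j hj.symm, ← Nat.cast_mul, hGor] at hz
  have hg' : 0 < (g : ℚ) := Nat.cast_pos.2 hg
  have hint : (g : ℚ) / w i = (z + g : ℤ) := by
    push_cast
    rw [← hz]
    ring
  have hpos : 0 < z + g := by
    have : 0 < (g : ℚ) / w i := div_pos hg' (hw.pos i)
    rw [hint] at this
    exact_mod_cast this
  lift z + g to ℕ using hpos.le with m
  refine ⟨m, by exact_mod_cast hpos, ?_⟩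
  rw [← Int.cast_natCast m, ← hint, div_div_cancel₀ hg'.ne']

end GorensteinIndex

section LinearEquivalence

namespace IsNormalizedWeight

variable {K : Type*} [Field K] [LinearOrder K] {d : ℕ} {v p : Fin (d + 1) → Fin d → K}
  {w q : Fin (d + 1) → K}

lemma det_castSucc_ne_zero (hw : IsNormalizedWeight v w) (hv : AffineIndependent K v) :
    (Matrix.of fun r c => v (Fin.castSucc c) r).det ≠ 0 := by
  intro hdet
  obtain ⟨c, hc0, hc⟩ := Matrix.exists_mulVec_eq_zero_iff.2 hdet
  have hrel : ∑ i, (Fin.snoc c 0 : Fin (d + 1) → K) i • v i = 0 := by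
    ext r
    simpa [Fin.sum_univ_castSucc, Matrix.mulVec, dotProduct, mul_comm] using congrFun hc r
  have hprop := hw.eq_sum_mul_of_sum_smul_eq_zero hv hrel
  have hsum : ∑ j, (Fin.snoc c 0 : Fin (d + 1) → K) j = 0 := by
    have hlast := (hprop (Fin.last d)).symm
    rw [Fin.snoc_last] at hlast
    exact (mul_eq_zero.1 hlast).resolve_right (hw.pos _).ne'
  refine hc0 (funext fun i => ?_)
  simpa [hsum] using hprop i.castSucc

theorem exists_mulVec_eq_iff (hw : IsNormalizedWeight v w) (hv : AffineIndependent K v)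
    (hq : IsNormalizedWeight p q) (hp : ∀ i : Fin d, p i.castSucc = Pi.single i 1) :
    (∃ H : Matrix (Fin d) (Fin d) K, H.det ≠ 0 ∧ ∀ i, v i = H.mulVec (p i)) ↔ w = q := by
  constructor
  · rintro ⟨H, -, hH⟩
    have hrel : ∑ i, q i • v i = 0 := by
      simp only [hH, ← Matrix.mulVec_smul, ← Matrix.mulVec_sum, hq.sum_smul_eq_zero,
        Matrix.mulVec_zero]
    funext i
    rw [hw.eq_sum_mul_of_sum_smul_eq_zero hv hrel i, hq.sum_eq_one, one_mul]
  · rintro rfl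
    set H : Matrix (Fin d) (Fin d) K := Matrix.of fun r c => v c.castSucc r
    have hbasis (i : Fin d) : v i.castSucc = H.mulVec (p i.castSucc) := by
      rw [hp, Matrix.mulVec_single_one]
      rfl
    refine ⟨H, hw.det_castSucc_ne_zero hv, Fin.lastCases ?_ hbasis⟩
    have hHp : ∑ i, w i • H.mulVec (p i) = 0 := by
      simp only [← Matrix.mulVec_smul, ← Matrix.mulVec_sum, hq.sum_smul_eq_zero, Matrix.mulVec_zero]
    have hrel := hw.sum_smul_eq_zero.trans hHp.symm
    simp only [Fin.sum_univ_castSucc, hbasis, add_right_inj] at hrel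
    exact smul_right_injective _ (hw.pos (Fin.last d)).ne' hrel

end IsNormalizedWeight

lemma PMahler_castSucc (g : ℕ) {d : ℕ} (i : Fin d) :
    PMahler g d i.castSucc = Pi.single i 1 := by
  ext j
  simp [PMahler, Pi.single_apply, Fin.ext_iff]

lemma PMahler_last (g : ℕ) {d : ℕ} (j : Fin d) :
    PMahler g d (Fin.last d) j = -((tsylv g (d + 1) : ℚ) / sylv g (j + 1)) := by
  simp [PMahler]

lemma isNormalizedWeight_PMahler {g : ℕ} (hg : 0 < g) (d : ℕ) :
    IsNormalizedWeight (PMahler g d) fun i => (g : ℚ) / sylvDenom g d i where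
  pos i := div_pos (Nat.cast_pos.2 hg) (Nat.cast_pos.2 (sylvDenom_pos hg d i))
  sum_eq_one := by
    simp only [div_eq_mul_inv, ← mul_sum]
    rw [Fin.sum_univ_eq_sum_range (fun i => (sylvDenom g d i : ℚ)⁻¹), sum_inv_sylvDenom ℚ hg,
      mul_inv_cancel₀ (Nat.cast_ne_zero.2 hg.ne')]
  sum_smul_eq_zero := by
    ext j
    have ht : (tsylv g (d + 1) : ℚ) ≠ 0 := Nat.cast_ne_zero.2 (tsylv_pos hg d).ne'
    simp only [Fin.sum_univ_castSucc, Finset.sum_apply, Pi.smul_apply, smul_eq_mul,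
      PMahler_castSucc, PMahler_last, Pi.single_apply, mul_ite, mul_one, mul_zero, sum_ite_eq,
      mem_univ, if_true, Fin.val_castSucc, Fin.val_last, sylvDenom_of_lt g j.isLt, sylvDenom_self,
      Pi.zero_apply]
    field_simp
    ring

end LinearEquivalence

lemma tsylv_sq_div_pow {g : ℕ} (hg : 0 < g) (d : ℕ) :
    (tsylv g (d + 1) : ℚ) ^ 2 / (g : ℚ) ^ (d + 2) =
      (∏ i : Fin (d + 1), sylvDenom g d i : ℕ) / (g : ℚ) ^ (d + 1) := by
  rw [Fin.prod_univ_eq_prod_range (sylvDenom g d), ← Nat.cast_pow, ← mul_prod_sylvDenom,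
    Nat.cast_mul, pow_succ' _ (d + 1), mul_div_mul_left _ _ (Nat.cast_ne_zero.2 hg.ne')]

/-- For a `d`-dimensional IP simplex `Δ` of Gorenstein index `g`
(with dual simplex `Δ*` having vertices `u`), one has
`Vol(Δ)·Vol(Δ*) ≤ t_{g,d+1}² / g^{d+2}`, with equality iff `Δ = H·Δ(P)` for some
`H ∈ GL(d,ℚ)`, where `P` is the listed extremal matrix. -/
theorem mahler_volume_bound
    (d g : ℕ) (hd : 2 ≤ d) (hg : 1 ≤ g)
    (v : Fin (d + 1) → Fin d → ℚ) (hIP : IsIPSimplex v)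
    (u : Fin (d + 1) → Fin d → ℚ)
    (hu : ∀ i j, i ≠ j → ∑ c, u i c * v j c = -1)
    (hGor : ratIndex v * ratIndex u = g) :
    normVol v * normVol u ≤ (tsylv g (d + 1) : ℚ) ^ 2 / (g : ℚ) ^ (d + 2) ∧
      (normVol v * normVol u = (tsylv g (d + 1) : ℚ) ^ 2 / (g : ℚ) ^ (d + 2) ↔
        ∃ (H : Matrix (Fin d) (Fin d) ℚ) (σ : Equiv.Perm (Fin (d + 1))),
          H.det ≠ 0 ∧ ∀ i, v (σ i) = H.mulVec (PMahler g d i)) := by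
  obtain ⟨w, hw⟩ := hIP.exists_isNormalizedWeight
  have hg' : (g : ℚ) ≠ 0 := Nat.cast_ne_zero.2 (Nat.pos_iff_ne_zero.1 hg)
  choose m hm hwm using exists_nat_weight_eq_div hw hu hg hGor
  have hsum : ∑ i, (m i : ℚ)⁻¹ = (g : ℚ)⁻¹ := by
    refine eq_inv_of_mul_eq_one_right ?_
    simpa only [hwm, div_eq_mul_inv, ← mul_sum] using hw.sum_eq_one
  have hvol : normVol v * normVol u = (∏ i, m i : ℕ) / (g : ℚ) ^ (d + 1) := by
    rw [normVol_mul_normVol_eq_prod_inv hw hu]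
    simp [hwm, prod_div_distrib]
  have hequiv (σ : Equiv.Perm (Fin (d + 1))) : (∀ i, m (σ i) = sylvDenom g d i) ↔
      ∃ H : Matrix (Fin d) (Fin d) ℚ, H.det ≠ 0 ∧ ∀ i, v (σ i) = H.mulVec (PMahler g d i) := by
    refine Iff.trans ?_ ((hw.comp_equiv σ).exists_mulVec_eq_iff (hIP.1.comp_embedding σ.toEmbedding)
      (isNormalizedWeight_PMahler hg d) (PMahler_castSucc g)).symm
    simp [funext_iff, hwm, div_eq_mul_inv, hg']
  rw [hvol, tsylv_sq_div_pow hg, div_le_div_iff_of_pos_right (by positivity),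
    div_left_inj' (pow_ne_zero _ hg'), Nat.cast_le, Nat.cast_inj,
    prod_eq_prod_sylvDenom_iff hg hm hsum, exists_comm]
  exact ⟨prod_le_prod_sylvDenom hg hm hsum, exists_congr hequiv⟩
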